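/- arXiv:2601.21930 — 3 statements merged into one kernel-verified Lean document; each statement's English description precedes it below -/
import Mathlib

section
/- Assume γ₊ ≥ 0 and Γ ≥ 0, and let z∞ ∈ [0,1). If a point (ℓ,z) with ℓ ≥ 0 and r := √(ℓ² + z²) < 1 does not lie in the critical zone, i.e. it is not the case that both 0 ≤ z < z∞ and r ≥ z∞, then σ(ℓ,z) ≥ 0. -/
/-!
With `arctanh z∞ = z∞ F(z∞)`, the longitudinal term is `γ₊ (z∞ - z) (z∞ F(z∞) - z F(r))`, so
the point is to compare `z F(r)` with `z∞ F(z∞)`. The power series `F(r) = ∑ r²ᵏ / (2k + 1)`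
shows that `F` is nonnegative and increasing in `|r|`. Outside the critical zone either `z < 0`,
or `z` and `r` both lie on the same side of `z∞` (as `z ≤ r`); in each case `z∞ F(z∞) - z F(r)`
has the same sign as `z∞ - z`.
-/

/-- Inverse hyperbolic tangent: arctanh r = (1/2) log((1+r)/(1-r)). -/
noncomputable def artanh (r : ℝ) : ℝ := (1/2) * Real.log ((1 + r) / (1 - r))

/-- F(r) := arctanh(r)/r with the convention F(0) = 1. -/
noncomputable def F (r : ℝ) : ℝ := if r = 0 then 1 else artanh r / r

/-- Fixed-point entropy production of the phase-covariant qubit dynamics,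
extended to the whole Bloch ball, at the point with Bloch coordinates (ℓ, z). -/
noncomputable def sigmaFP (Γ γp zinf ℓ z : ℝ) : ℝ :=
  Γ * ℓ ^ 2 * F (Real.sqrt (ℓ ^ 2 + z ^ 2)) +
    γp * (zinf - z) * (artanh zinf - z * F (Real.sqrt (ℓ ^ 2 + z ^ 2)))

lemma mul_F (r : ℝ) : r * F r = artanh r := by
  rcases eq_or_ne r 0 with rfl | hr
  · simp [artanh]
  · rw [F, if_neg hr, mul_div_cancel₀ _ hr]

lemma hasSum_artanh {r : ℝ} (hr : |r| < 1) :
    HasSum (fun k : ℕ => r ^ (2 * k + 1) / (2 * k + 1)) (artanh r) := by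
  obtain ⟨h_neg, h_pos⟩ := abs_lt.mp hr
  have h_log : artanh r = 1 / 2 * (Real.log (1 + r) - Real.log (1 - r)) := by
    rw [artanh, Real.log_div (by linarith) (by linarith)]
  rw [h_log]
  refine ((Real.hasSum_log_sub_log_of_abs_lt_one hr).mul_left (1 / 2)).congr_fun fun k => ?_
  ring

lemma hasSum_F {r : ℝ} (hr : |r| < 1) :
    HasSum (fun k : ℕ => r ^ (2 * k) / (2 * k + 1)) (F r) := by
  rcases eq_or_ne r 0 with rfl | hr0
  · simpa [F] using hasSum_single (f := fun k : ℕ => (0 : ℝ) ^ (2 * k) / (2 * k + 1)) 0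
      fun k hk => by simp [hk]
  · rw [F, if_neg hr0]
    refine ((hasSum_artanh hr).div_const r).congr_fun fun k => ?_
    rw [pow_succ, mul_div_right_comm, mul_div_cancel_right₀ _ hr0]

lemma F_nonneg {r : ℝ} (hr : |r| < 1) : 0 ≤ F r :=
  (hasSum_F hr).nonneg fun k => div_nonneg ((even_two_mul k).pow_nonneg r) (by positivity)

lemma F_le_F_of_abs_le {r s : ℝ} (hrs : |r| ≤ |s|) (hs : |s| < 1) : F r ≤ F s := by
  refine hasSum_le (fun k => ?_) (hasSum_F (hrs.trans_lt hs)) (hasSum_F hs)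
  have h_pow : r ^ (2 * k) ≤ s ^ (2 * k) := by
    simpa only [pow_mul] using pow_le_pow_left₀ (sq_nonneg r) (sq_le_sq.mpr hrs) k
  gcongr

lemma mul_F_le_mul_F {x y r s : ℝ} (hxy : x ≤ y) (hy : 0 ≤ y) (hrs : |r| ≤ |s|) (hs : |s| < 1) :
    x * F r ≤ y * F s :=
  mul_le_mul hxy (F_le_F_of_abs_le hrs hs) (F_nonneg (hrs.trans_lt hs)) hy

lemma sub_mul_artanh_sub_mul_F_nonneg {w z r : ℝ} (hw0 : 0 ≤ w) (hw1 : w < 1) (hr0 : 0 ≤ r)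
    (hr1 : r < 1) (hzr : z ≤ r) (hcrit : ¬(0 ≤ z ∧ z < w ∧ w ≤ r)) :
    0 ≤ (w - z) * (artanh w - z * F r) := by
  have hr_abs : |r| < 1 := by rwa [abs_of_nonneg hr0]
  have hw_abs : |w| < 1 := by rwa [abs_of_nonneg hw0]
  rw [← mul_F w]
  rcases le_or_gt w z with hwz | hzw
  · have h_le : w * F w ≤ z * F r :=
      mul_F_le_mul_F hwz (hw0.trans hwz) (abs_le_abs_of_nonneg hw0 (hwz.trans hzr)) hr_abs
    exact mul_nonneg_of_nonpos_of_nonpos (sub_nonpos.mpr hwz) (sub_nonpos.mpr h_le)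
  · have h_le : z * F r ≤ w * F w := by
      rcases lt_or_ge z 0 with hz_neg | hz_nonneg
      · exact (mul_nonpos_of_nonpos_of_nonneg hz_neg.le (F_nonneg hr_abs)).trans
          (mul_nonneg hw0 (F_nonneg hw_abs))
      · have hrw : r < w := lt_of_not_ge fun hwr => hcrit ⟨hz_nonneg, hzw, hwr⟩
        exact mul_F_le_mul_F hzw.le hw0 (abs_le_abs_of_nonneg hr0 hrw.le) hw_abs
    exact mul_nonneg (sub_nonneg.mpr hzw.le) (sub_nonneg.mpr h_le)

/-- Outside the critical zone, the entropy production is nonnegative. -/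
theorem sigmaFP_nonneg_outside_critical_zone
    (zinf Γ γp : ℝ) (hγ : 0 ≤ γp) (hΓ : 0 ≤ Γ) (hz0 : 0 ≤ zinf) (hz1 : zinf < 1)
    (ℓ z : ℝ) (hℓ : 0 ≤ ℓ) (hr : Real.sqrt (ℓ ^ 2 + z ^ 2) < 1)
    (hcrit : ¬ (0 ≤ z ∧ z < zinf ∧ zinf ≤ Real.sqrt (ℓ ^ 2 + z ^ 2))) :
    0 ≤ sigmaFP Γ γp zinf ℓ z := by
  have hr0 : 0 ≤ Real.sqrt (ℓ ^ 2 + z ^ 2) := Real.sqrt_nonneg _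
  have hzr : z ≤ Real.sqrt (ℓ ^ 2 + z ^ 2) :=
    Real.le_sqrt_of_sq_le (le_add_of_nonneg_left (sq_nonneg ℓ))
  have hF : 0 ≤ F (Real.sqrt (ℓ ^ 2 + z ^ 2)) := F_nonneg (by rwa [abs_of_nonneg hr0])
  rw [sigmaFP, mul_assoc γp]
  exact add_nonneg (mul_nonneg (mul_nonneg hΓ (sq_nonneg ℓ)) hF)
    (mul_nonneg hγ (sub_mul_artanh_sub_mul_F_nonneg hz0 hz1 hr0 hr hzr hcrit))
end

section
/- Let z∞ ∈ (0,1) and set α := 1 − √(1 − z∞²). Then for every z ∈ [0, z∞] and every ℓ ≥ 0 such that z∞² ≤ ℓ² + z² < 1, writing r := √(ℓ² + z²), one has s_m(ℓ,z) := (α/2)·(ℓ²/r)·arctanh(r) + (z∞ − z)·(arctanh(z∞) − (z/r)·arctanh(r)) ≥ 0. (This is the key sufficiency estimate: for the marginally P-divisible dynamics with 2Γ = α·γ₊, the entropy production is nonnegative throughout the critical zone.) -/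
lemma artanh_eq_real_artanh {x : ℝ} (hx : x ∈ Set.Icc (-1) 1) : artanh x = Real.artanh x := by
  rw [artanh, Real.artanh_eq_half_log hx]

lemma hasSum_mul_artanh {x : ℝ} (hx : |x| < 1) :
    HasSum (fun k : ℕ ↦ (x ^ 2) ^ (k + 1) / (2 * k + 1)) (x * artanh x) := by
  obtain ⟨hx_gt, hx_lt⟩ := abs_lt.1 hx
  convert! (Real.hasSum_log_sub_log_of_abs_lt_one hx).mul_left (x / 2) using 1
  · ext k
    ring
  · rw [artanh, Real.log_div (by linarith) (by linarith)]
    ring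

lemma sq_le_mul_artanh {x : ℝ} (hx : |x| < 1) : x ^ 2 ≤ x * artanh x := by
  simpa using le_hasSum (hasSum_mul_artanh hx) 0 fun k _ ↦ by positivity

lemma artanh_pos {x : ℝ} (hx₀ : 0 < x) (hx₁ : x < 1) : 0 < artanh x :=
  pos_of_mul_pos_right ((sq_pos_of_pos hx₀).trans_le
    (sq_le_mul_artanh (abs_lt.2 ⟨by linarith, hx₁⟩))) hx₀.le

/-- Monotonicity of `artanh x / x` in `|x|`, with denominators cleared to include `x = 0`. -/
lemma sq_mul_mul_artanh_le {x y : ℝ} (hxy : |x| ≤ |y|) (hy : |y| < 1) :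
    y ^ 2 * (x * artanh x) ≤ x ^ 2 * (y * artanh y) := by
  refine hasSum_le (fun k ↦ ?_) ((hasSum_mul_artanh (hxy.trans_lt hy)).mul_left (y ^ 2))
    ((hasSum_mul_artanh hy).mul_left (x ^ 2))
  have hsq : x ^ 2 ≤ y ^ 2 := sq_le_sq.2 hxy
  calc y ^ 2 * ((x ^ 2) ^ (k + 1) / (2 * k + 1))
      = x ^ 2 * y ^ 2 * (x ^ 2) ^ k / (2 * k + 1) := by ring
    _ ≤ x ^ 2 * y ^ 2 * (y ^ 2) ^ k / (2 * k + 1) := by gcongr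
    _ = x ^ 2 * ((y ^ 2) ^ (k + 1) / (2 * k + 1)) := by ring

lemma sqrt_one_sub_sq_mul_artanh_le {x : ℝ} (hx₀ : 0 ≤ x) (hx₁ : x < 1) :
    √(1 - x ^ 2) * artanh x ≤ x := by
  have hsqrt : 0 < √(1 - x ^ 2) := Real.sqrt_pos.2 (by nlinarith)
  have hsinh : artanh x ≤ x / √(1 - x ^ 2) := by
    rw [artanh_eq_real_artanh ⟨by linarith, hx₁.le⟩, ← Real.sinh_artanh ⟨by linarith, hx₁⟩]
    exact Real.self_le_sinh_iff.2 (Real.artanh_nonneg hx₀)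
  rwa [← le_div_iff₀' hsqrt]

lemma exists_artanh_eq_mul {a r : ℝ} (hr₀ : 0 < r) (hr₁ : r < 1) (har : |a| ≤ r) :
    ∃ t ∈ Set.Icc √(1 - r ^ 2) 1, artanh a = t * a * (artanh r / r) := by
  rcases eq_or_ne a 0 with rfl | ha
  · exact ⟨1, ⟨Real.sqrt_le_one.2 (by nlinarith), le_rfl⟩, by simp [artanh]⟩
  have hr_abs : |r| = r := abs_of_pos hr₀
  have hr_artanh : 0 < artanh r := artanh_pos hr₀ hr₁
  refine ⟨r * (a * artanh a) / (a ^ 2 * artanh r), ⟨?_, ?_⟩, by field_simp⟩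
  · rw [le_div_iff₀ (by positivity)]
    calc √(1 - r ^ 2) * (a ^ 2 * artanh r) = a ^ 2 * (√(1 - r ^ 2) * artanh r) := by ring
      _ ≤ a ^ 2 * r := by gcongr; exact sqrt_one_sub_sq_mul_artanh_le hr₀.le hr₁
      _ = r * a ^ 2 := mul_comm _ _
      _ ≤ r * (a * artanh a) := by gcongr; exact sq_le_mul_artanh (har.trans_lt hr₁)
  · rw [div_le_one (by positivity)]
    refine le_of_mul_le_mul_left ?_ hr₀
    calc r * (r * (a * artanh a)) = r ^ 2 * (a * artanh a) := by ring
      _ ≤ a ^ 2 * (r * artanh r) :=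
        sq_mul_mul_artanh_le (har.trans_eq hr_abs.symm) (hr_abs.trans_lt hr₁)
      _ = r * (a ^ 2 * artanh r) := by ring

/-- The entropy production per unit of `γ₊ · artanh r / r`, where `r = √(ℓ² + z²)`, for the marginal
rate `2Γ = (1 - √(1 - a²)) γ₊` and the fixed point `a = z∞`. The parameter `t` is the ratio of
`artanh a / a` to `artanh r / r`, treated as an independent variable. -/
noncomputable def reducedEntropyProduction (a ℓ z t : ℝ) : ℝ :=
  (1 - √(1 - a ^ 2)) / 2 * ℓ ^ 2 + (a - z) * (t * a - z)

section Reduced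

variable {a z ℓ : ℝ}

lemma reducedEntropyProduction_sqrt_nonneg (hlo : a ^ 2 ≤ ℓ ^ 2 + z ^ 2)
    (hhi : ℓ ^ 2 + z ^ 2 ≤ 1) :
    0 ≤ reducedEntropyProduction a ℓ z √(1 - (ℓ ^ 2 + z ^ 2)) := by
  have hc_sq : √(1 - a ^ 2) ^ 2 = 1 - a ^ 2 := Real.sq_sqrt (by linarith)
  have hs_sq : √(1 - (ℓ ^ 2 + z ^ 2)) ^ 2 = 1 - (ℓ ^ 2 + z ^ 2) := Real.sq_sqrt (by linarith)
  have hsc : 0 ≤ √(1 - a ^ 2) - √(1 - (ℓ ^ 2 + z ^ 2)) :=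
    sub_nonneg.2 (Real.sqrt_le_sqrt (by linarith))
  have hc : 0 ≤ √(1 - a ^ 2) := Real.sqrt_nonneg _
  have hs : 0 ≤ √(1 - (ℓ ^ 2 + z ^ 2)) := Real.sqrt_nonneg _
  rw [reducedEntropyProduction]
  set c := √(1 - a ^ 2)
  set s := √(1 - (ℓ ^ 2 + z ^ 2))
  have complete_square : 2 * (1 + c) * ((1 - c) / 2 * ℓ ^ 2 + (a - z) * (s * a - z))
      = ((1 + c) * z - (1 + s) * a) ^ 2 + 2 * a ^ 2 * s * (c - s) := by
    linear_combination (-ℓ ^ 2 - z ^ 2) * hc_sq + a ^ 2 * hs_sq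
  refine nonneg_of_mul_nonneg_right ?_ (by positivity : 0 < 2 * (1 + c))
  rw [complete_square]
  positivity

lemma reducedEntropyProduction_one_nonneg : 0 ≤ reducedEntropyProduction a ℓ z 1 := by
  have hα : 0 ≤ 1 - √(1 - a ^ 2) :=
    sub_nonneg.2 (Real.sqrt_le_one.2 (sub_le_self 1 (sq_nonneg a)))
  rw [reducedEntropyProduction, one_mul, ← sq]
  positivity

lemma reducedEntropyProduction_nonneg {t : ℝ} (hlo : a ^ 2 ≤ ℓ ^ 2 + z ^ 2)
    (hhi : ℓ ^ 2 + z ^ 2 ≤ 1) (ht : t ∈ Set.Icc √(1 - (ℓ ^ 2 + z ^ 2)) 1) :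
    0 ≤ reducedEntropyProduction a ℓ z t := by
  have affine (u : ℝ) : reducedEntropyProduction a ℓ z t
      = reducedEntropyProduction a ℓ z u + (t - u) * ((a - z) * a) := by
    simp only [reducedEntropyProduction]
    ring
  rcases le_total 0 ((a - z) * a) with hslope | hslope
  · rw [affine √(1 - (ℓ ^ 2 + z ^ 2))]
    exact add_nonneg (reducedEntropyProduction_sqrt_nonneg hlo hhi)
      (mul_nonneg (sub_nonneg.2 ht.1) hslope)
  · rw [affine 1]
    exact add_nonneg reducedEntropyProduction_one_nonneg
      (mul_nonneg_of_nonpos_of_nonpos (sub_nonpos.2 ht.2) hslope)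

end Reduced

theorem marginal_entropy_production_nonneg_general {zinf z ℓ : ℝ} (hpos : 0 < ℓ ^ 2 + z ^ 2)
    (hlo : zinf ^ 2 ≤ ℓ ^ 2 + z ^ 2) (hhi : ℓ ^ 2 + z ^ 2 < 1) :
    0 ≤ (1 - √(1 - zinf ^ 2)) / 2 * (ℓ ^ 2 / √(ℓ ^ 2 + z ^ 2)) * artanh √(ℓ ^ 2 + z ^ 2)
        + (zinf - z) * (artanh zinf - z / √(ℓ ^ 2 + z ^ 2) * artanh √(ℓ ^ 2 + z ^ 2)) := by
  have hr_sq : √(ℓ ^ 2 + z ^ 2) ^ 2 = ℓ ^ 2 + z ^ 2 := Real.sq_sqrt hpos.le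
  have hr₀ : 0 < √(ℓ ^ 2 + z ^ 2) := Real.sqrt_pos.2 hpos
  have hr₁ : √(ℓ ^ 2 + z ^ 2) < 1 := (Real.sqrt_lt' one_pos).2 (hhi.trans_eq (one_pow 2).symm)
  set r := √(ℓ ^ 2 + z ^ 2)
  obtain ⟨t, ht, hartanh⟩ := exists_artanh_eq_mul hr₀ hr₁ (Real.abs_le_sqrt hlo)
  rw [hr_sq] at ht
  calc 0 ≤ artanh r / r * reducedEntropyProduction zinf ℓ z t :=
        mul_nonneg (div_pos (artanh_pos hr₀ hr₁) hr₀).le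
          (reducedEntropyProduction_nonneg hlo hhi.le ht)
    _ = (1 - √(1 - zinf ^ 2)) / 2 * (ℓ ^ 2 / r) * artanh r
        + (zinf - z) * (artanh zinf - z / r * artanh r) := by
      rw [hartanh, reducedEntropyProduction]
      ring

/-- Key sufficiency estimate: for the marginally P-divisible dynamics with
2Γ = α·γ₊, α = 1 − √(1 − z∞²), the entropy production is nonnegative throughout
the critical zone. -/
theorem marginal_entropy_production_nonneg
    (zinf : ℝ) (h1 : 0 < zinf) (h2 : zinf < 1)
    (z ℓ : ℝ) (hz0 : 0 ≤ z) (hz : z ≤ zinf) (hℓ : 0 ≤ ℓ)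
    (hlo : zinf ^ 2 ≤ ℓ ^ 2 + z ^ 2) (hhi : ℓ ^ 2 + z ^ 2 < 1) :
    0 ≤ (1 - Real.sqrt (1 - zinf ^ 2)) / 2 *
          (ℓ ^ 2 / Real.sqrt (ℓ ^ 2 + z ^ 2)) * artanh (Real.sqrt (ℓ ^ 2 + z ^ 2))
        + (zinf - z) *
          (artanh zinf - z / Real.sqrt (ℓ ^ 2 + z ^ 2) * artanh (Real.sqrt (ℓ ^ 2 + z ^ 2))) := by
  exact marginal_entropy_production_nonneg_general ((sq_pos_of_pos h1).trans_le hlo) hlo hhi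
end

section
/- Let z∞ ∈ (0,1) and let Γ, γ₊ be real numbers with 0 ≤ Γ < γ₊ and 4·Γ·(γ₊ − Γ) < γ₊²·z∞² (i.e. the dynamics is not P-divisible). Then the function G(r) := Γ·r·arctanh(r) + γ₊·z∞·arctanh(z∞) − γ₊²·(r·arctanh(z∞) + z∞·arctanh(r))²/(4·r·arctanh(r)·(γ₊ − Γ)) tends to −∞ as r → 1⁻. (G(r) is the minimum over the polar angle of the extended fixed-point entropy production on the sphere of Bloch radius r, so its divergence to −∞ shows that the map entropy production is negative when P-divisibility fails.) -/
/-!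
Write `A = artanh r` and `a = artanh zinf`. Dividing the minimum by `A`, the cross term and the
`a ^ 2` term of the square become negligible because `A → ∞` as `r → 1⁻`, and what remains converges
to `Γ - γp ^ 2 * zinf ^ 2 / (4 * (γp - Γ))`. Failure of P-divisibility says precisely that this
slope is negative.
-/

open Filter Topology

section OrderedField

variable {ι 𝕜 : Type*} [Field 𝕜] [LinearOrder 𝕜] [IsStrictOrderedRing 𝕜] [TopologicalSpace 𝕜]
  [OrderTopology 𝕜]

theorem tendsto_one_add_div_one_sub_nhdsLT_one :
    Tendsto (fun r : 𝕜 => (1 + r) / (1 - r)) (𝓝[<] 1) atTop := by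
  have numerator : Tendsto (fun r : 𝕜 => 1 + r) (𝓝[<] 1) (𝓝 (1 + 1)) :=
    (tendsto_id.const_add 1).mono_left nhdsWithin_le_nhds
  have denominator : Tendsto (fun r : 𝕜 => 1 - r) (𝓝[<] 1) (𝓝[>] 0) := by
    refine tendsto_nhdsWithin_iff.2 ⟨?_, eventually_mem_nhdsWithin.mono fun r hr => sub_pos.2 hr⟩
    simpa only [sub_self, id_eq] using
      ((tendsto_id (x := 𝓝 (1 : 𝕜))).const_sub 1).mono_left nhdsWithin_le_nhds
  simpa only [div_eq_mul_inv, Pi.inv_apply] using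
    numerator.pos_mul_atTop (by positivity) denominator.inv_tendsto_nhdsGT_zero

variable {l : Filter ι} {r A : ι → 𝕜} {ρ : 𝕜}

theorem tendsto_add_sq_div_mul_div (a z : 𝕜) (hr : Tendsto r l (𝓝 ρ)) (hρ : ρ ≠ 0)
    (hA : Tendsto A l atTop) :
    Tendsto (fun x => (r x * a + z * A x) ^ 2 / (r x * A x) / A x) l (𝓝 (z ^ 2 / ρ)) := by
  have reduced : Tendsto (fun x => (r x * a / A x + z) ^ 2 / r x) l (𝓝 (z ^ 2 / ρ)) := by
    simpa only [zero_add, Pi.div_def] using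
      ((((hr.mul_const a).div_atTop hA).add_const z).pow 2).div hr hρ
  refine reduced.congr' ?_
  filter_upwards [hA.eventually_ne_atTop 0] with x hAx
  field

theorem tendsto_min_entropy_production_div (a b z Γ γ : 𝕜) (hr : Tendsto r l (𝓝 ρ)) (hρ : ρ ≠ 0)
    (hA : Tendsto A l atTop) :
    Tendsto (fun x => (Γ * r x * A x + b -
        γ ^ 2 * (r x * a + z * A x) ^ 2 / (4 * r x * A x * (γ - Γ))) / A x)
      l (𝓝 (Γ * ρ - γ ^ 2 / (4 * (γ - Γ)) * (z ^ 2 / ρ))) := by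
  have split : Tendsto (fun x => Γ * r x + b / A x -
        γ ^ 2 / (4 * (γ - Γ)) * ((r x * a + z * A x) ^ 2 / (r x * A x) / A x))
      l (𝓝 (Γ * ρ - γ ^ 2 / (4 * (γ - Γ)) * (z ^ 2 / ρ))) := by
    simpa only [add_zero] using ((hr.const_mul Γ).add (hA.const_div_atTop b)).sub
      ((tendsto_add_sq_div_mul_div a z hr hρ hA).const_mul (γ ^ 2 / (4 * (γ - Γ))))
  refine split.congr' ?_
  filter_upwards [hA.eventually_ne_atTop 0] with x hAx
  have regroup : 4 * (γ - Γ) * (r x * A x) = 4 * r x * A x * (γ - Γ) := by ring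
  rw [sub_div, add_div, mul_div_cancel_right₀ _ hAx, ← mul_div_assoc, div_mul_div_comm, regroup]

end OrderedField

theorem tendsto_artanh_nhdsLT_one : Tendsto artanh (𝓝[<] 1) atTop :=
  (Real.tendsto_log_atTop.comp tendsto_one_add_div_one_sub_nhdsLT_one).const_mul_atTop
    one_half_pos

/-- The value of `artanh zinf` enters only at lower order, hence the arbitrary `ainf`. -/
theorem min_entropy_production_tendsto_atBot_general (zinf ainf Γ γp : ℝ) (hΓγ : Γ < γp)
    (hnP : 4 * Γ * (γp - Γ) < γp ^ 2 * zinf ^ 2) :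
    Tendsto
      (fun r : ℝ => Γ * r * artanh r + γp * zinf * ainf -
        γp ^ 2 * (r * ainf + zinf * artanh r) ^ 2 / (4 * r * artanh r * (γp - Γ)))
      (𝓝[<] 1) atBot := by
  have gap_pos : 0 < 4 * (γp - Γ) := mul_pos four_pos (sub_pos.2 hΓγ)
  have slope_neg : Γ - γp ^ 2 / (4 * (γp - Γ)) * zinf ^ 2 < 0 := by
    rw [div_mul_eq_mul_div, sub_neg, lt_div_iff₀ gap_pos]
    linarith
  have slope := tendsto_min_entropy_production_div ainf (γp * zinf * ainf) zinf Γ γp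
    (tendsto_id.mono_left nhdsWithin_le_nhds) one_ne_zero tendsto_artanh_nhdsLT_one
  simp only [mul_one, div_one] at slope
  exact (slope.neg_mul_atTop slope_neg tendsto_artanh_nhdsLT_one).congr'
    (EventuallyEq.div_mul_cancel_atTop tendsto_artanh_nhdsLT_one)

/-- When P-divisibility fails (4Γ(γ₊ − Γ) < γ₊²z∞² with 0 ≤ Γ < γ₊), the minimum over
the polar angle of the extended fixed-point entropy production on the Bloch sphere of
radius r tends to −∞ as r → 1⁻. -/
theorem min_entropy_production_tendsto_atBot
    (zinf Γ γp : ℝ) (h1 : 0 < zinf) (h2 : zinf < 1)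
    (hΓ : 0 ≤ Γ) (hΓγ : Γ < γp)
    (hnP : 4 * Γ * (γp - Γ) < γp ^ 2 * zinf ^ 2) :
    Filter.Tendsto
      (fun r : ℝ => Γ * r * artanh r + γp * zinf * artanh zinf -
        γp ^ 2 * (r * artanh zinf + zinf * artanh r) ^ 2 /
          (4 * r * artanh r * (γp - Γ)))
      (nhdsWithin 1 (Set.Iio 1)) Filter.atBot :=
  min_entropy_production_tendsto_atBot_general zinf (artanh zinf) Γ γp hΓγ hnP
end
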